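/- For a nonnegative integer ℓ, nonnegative integer n, and complex numbers q, x with no vanishing denominators: sum over k from 0 to n of (q^{-3n};q^3)_k * (x;q)_k (q^{2-ℓ}/x;q)_k / ((q;q)_k (-q;q)_k (q^{3/2};q)_k (-q^{3/2-ℓ};q)_k (q^{-1-3n};q)_k) * q^k equals [(xq^{-1};q)_ℓ (-xq^{-1/2};q)_ℓ / ((x^2 q^{-1};q)_ℓ (-q^{-1/2};q)_ℓ)] times the sum over i from 0 to ℓ of (-1)^i q^{(ℓ - 1/2)i} * (1 - x^2 q^{2i-2})/(1 - x^2 q^{-2}) * ((q^{-ℓ};q)_i (x;q)_i (x^2 q^{-2};q)_i)/((q;q)_i (xq^{-1};q)_i (x^2 q^{ℓ-1};q)_i) * ((q^{2+i}x; q^3)_n (q^{4-i}/x; q^3)_n)/((q^2;q^3)_n (q^4;q^3)_n). (Extension of the second q-Gosper identity with an extra integer parameter.) -/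

import Mathlib

/-- q-Pochhammer symbol `(a; q)_k`. -/
noncomputable def qpoch (a q : ℂ) (k : ℕ) : ℂ := ∏ j ∈ Finset.range k, (1 - a * q ^ j)

theorem qpoch_zero (a q : ℂ) : qpoch a q 0 = 1 := by simp [qpoch]

theorem qpoch_succ (a q : ℂ) (k : ℕ) : qpoch a q (k + 1) = qpoch a q k * (1 - a * q ^ k) := by
  simp [qpoch, Finset.prod_range_succ]

theorem qpoch_add (a q : ℂ) (m k : ℕ) :
    qpoch a q (m + k) = qpoch a q m * qpoch (a * q ^ m) q k := by
  simp only [qpoch, Finset.prod_range_add]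
  congr 1
  exact Finset.prod_congr rfl fun j _ => by ring

theorem qpoch_shift (a q : ℂ) (k : ℕ) :
    (1 - a) * qpoch (a * q) q k = qpoch a q k * (1 - a * q ^ k) := by
  have h := qpoch_add a q 1 k
  rw [add_comm, qpoch_succ] at h
  simpa [qpoch] using h.symm

theorem qpoch_ne_zero {a q : ℂ} {k : ℕ} (h : ∀ j : ℕ, a * q ^ j ≠ 1) : qpoch a q k ≠ 0 :=
  Finset.prod_ne_zero_iff.2 fun j _ => sub_ne_zero.2 (h j).symm

theorem qpoch_eq_zero {a q : ℂ} {j k : ℕ} (hj : j < k) (h : a * q ^ j = 1) : qpoch a q k = 0 :=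
  Finset.prod_eq_zero (Finset.mem_range.2 hj) (by rw [h, sub_self])

/-- Lowering the base of `(q ^ 2 / x; q)_k` by `q ^ i`, expressed through reversed symbols. -/
theorem qpoch_reflect {q x : ℂ} (hq : q ≠ 0) (hx : x ≠ 0) (k i : ℕ) :
    qpoch (q ^ (2 - i : ℤ) / x) q k * qpoch (x * q ^ (-1 - k : ℤ)) q i * q ^ (k * i) =
      qpoch (q ^ 2 / x) q k * qpoch (x / q) q i := by
  induction i with
  | zero => simp [qpoch_zero]
  | succ i ih =>
    have h := qpoch_shift (q ^ (2 - (i + 1 : ℕ) : ℤ) / x) q k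
    have e : q ^ (2 - (i + 1 : ℕ) : ℤ) / x * q = q ^ (2 - i : ℤ) / x := by
      have : (2 - i : ℤ) = (2 - (i + 1 : ℕ) : ℤ) + 1 := by push_cast; ring
      rw [this, zpow_add₀ hq]; simp; ring
    rw [e] at h
    rw [qpoch_succ, qpoch_succ]
    have e1 : 1 - x / q * q ^ i =
        -(x / q * q ^ i) * (1 - q ^ (2 - (i + 1 : ℕ) : ℤ) / x) := by
      have : q ^ (2 - (i + 1 : ℕ) : ℤ) = q / q ^ i := by
        rw [show (2 - (i + 1 : ℕ) : ℤ) = 1 - i by push_cast; ring, zpow_sub₀ hq]; simp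
      rw [this]; field_simp; ring
    have e2 : (1 - x * q ^ (-1 - k : ℤ) * q ^ i) * q ^ k =
        -(x / q * q ^ i) * (1 - q ^ (2 - (i + 1 : ℕ) : ℤ) / x * q ^ k) := by
      have : q ^ (2 - (i + 1 : ℕ) : ℤ) = q / q ^ i := by
        rw [show (2 - (i + 1 : ℕ) : ℤ) = 1 - i by push_cast; ring, zpow_sub₀ hq]; simp
      have h' : q ^ (-1 - k : ℤ) = 1 / (q * q ^ k) := by
        rw [zpow_sub₀ hq]; simp; ring
      rw [this, h']; field_simp; ring
    rw [e1, mul_add, pow_add, mul_one]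
    linear_combination (qpoch (q ^ (2 - (i + 1 : ℕ) : ℤ) / x) q k *
      qpoch (x * q ^ (-1 - k : ℤ)) q i * q ^ (k * i)) * e2 +
      (qpoch (x * q ^ (-1 - k : ℤ)) q i * q ^ (k * i) * (x / q * q ^ i)) * h +
      (-(x / q * q ^ i) * (1 - q ^ (2 - (i + 1 : ℕ) : ℤ) / x)) * ih

theorem sixPhiFive_certificate {a b c q M I : ℂ} (hb : b ≠ 0) (hc : c ≠ 0)
    (hq : q ≠ 0) (hM : M ≠ 0) (h1 : 1 - a * q * M / b ≠ 0) (h2 : 1 - a * q * M / c ≠ 0)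
    (h3 : 1 - 1 / (q * M) ≠ 0) (h4 : 1 - a * q * M * I ≠ 0) :
    (1 - a * I ^ 2) * (I * (1 - a * q * M) / (1 - a * q * M * I) -
      (1 - a * q * M) * (1 - a * q * M / (b * c)) /
        ((1 - a * q * M / b) * (1 - a * q * M / c)) * ((1 - I / (q * M)) / (1 - 1 / (q * M)))) =
    (1 - a * q * M) / ((1 - a * q * M / b) * (1 - a * q * M / c) * (1 - 1 / (q * M))) *
      (a * q * M / (b * c) * (1 - a * I) * (1 - b * I) * (1 - c * I) * (1 - I / (q * M)) /
        (1 - a * q * M * I) - (1 - I) * (1 - a * I / b) * (1 - a * I / c)) := by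
  have h1' : b - a * q * M ≠ 0 := by
    intro h; apply h1; rw [← sub_eq_zero.1 h]; field_simp; ring
  have h2' : c - a * q * M ≠ 0 := by
    intro h; apply h2; rw [← sub_eq_zero.1 h]; field_simp; ring
  have h3' : q * M - 1 ≠ 0 := by
    intro h; apply h3; rw [sub_eq_zero.1 h]; norm_num
  generalize hE : 1 - a * q * M * I = E at *
  field_simp
  rw [← hE]
  ring

noncomputable def sixPhiFiveTerm (a b c q : ℂ) (l i : ℕ) : ℂ :=
  (1 - a * q ^ (2 * i)) * (qpoch a q i * qpoch b q i * qpoch c q i * qpoch (q ^ (-(l : ℤ))) q i) /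
    (qpoch q q i * qpoch (a * q / b) q i * qpoch (a * q / c) q i * qpoch (a * q ^ (l + 1)) q i) *
    (a * q ^ (l + 1) / (b * c)) ^ i

/-- The terminating very-well-poised basic hypergeometric summation. -/
theorem sixPhiFive_sum {a b c q : ℂ} (hb : b ≠ 0) (hc : c ≠ 0) (hq : q ≠ 0)
    (hq1 : ∀ m : ℕ, q ^ (m + 1) ≠ 1) (ha : ∀ m : ℕ, a * q ^ (m + 1) ≠ 1)
    (hab : ∀ m : ℕ, a * q ^ (m + 1) / b ≠ 1) (hac : ∀ m : ℕ, a * q ^ (m + 1) / c ≠ 1) (l : ℕ) :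
    ∑ i ∈ Finset.range (l + 1), sixPhiFiveTerm a b c q l i =
      (1 - a) * (qpoch (a * q) q l * qpoch (a * q / (b * c)) q l) /
        (qpoch (a * q / b) q l * qpoch (a * q / c) q l) := by
  induction l with
  | zero => simp [sixPhiFiveTerm, qpoch_zero]
  | succ l ih =>
    set M := q ^ l with hM
    have hM0 : M ≠ 0 := pow_ne_zero _ hq
    have hP : ∀ i, qpoch q q i ≠ 0 := fun i =>
      qpoch_ne_zero fun j => by rw [← pow_succ']; exact hq1 j
    have hB : ∀ i, qpoch (a * q / b) q i ≠ 0 := fun i =>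
      qpoch_ne_zero fun j => by convert hab j using 1; ring
    have hC : ∀ i, qpoch (a * q / c) q i ≠ 0 := fun i =>
      qpoch_ne_zero fun j => by convert hac j using 1; ring
    have hD : ∀ r i, qpoch (a * q ^ (r + 1)) q i ≠ 0 := fun r i =>
      qpoch_ne_zero fun j => by
        have := ha (r + j); rw [show r + j + 1 = r + 1 + j by ring, pow_add] at this
        rwa [mul_assoc]
    have h1 : 1 - a * q * M / b ≠ 0 := by
      have := hab l; rw [pow_succ'] at this; rw [hM, mul_assoc]; exact sub_ne_zero.2 this.symm
    have h2 : 1 - a * q * M / c ≠ 0 := by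
      have := hac l; rw [pow_succ'] at this; rw [hM, mul_assoc]; exact sub_ne_zero.2 this.symm
    have h3 : 1 - 1 / (q * M) ≠ 0 := by
      have := hq1 l; rw [pow_succ'] at this
      intro h; apply this
      have := sub_eq_zero.1 h
      field_simp at this; exact this
    have h4 : ∀ i, 1 - a * q * M * q ^ i ≠ 0 := fun i => by
      have := ha (l + i); rw [pow_succ', pow_add] at this
      rw [hM, mul_assoc, mul_assoc]; exact sub_ne_zero.2 this.symm
    set ρ := (1 - a * q * M) * (1 - a * q * M / (b * c)) /
        ((1 - a * q * M / b) * (1 - a * q * M / c)) with hρ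
    let W : ℕ → ℂ := fun i =>
      qpoch a q i * qpoch b q i * qpoch c q i * qpoch (1 / (q * M)) q i /
        (qpoch q q i * qpoch (a * q / b) q i * qpoch (a * q / c) q i * qpoch (a * q * M) q i) *
      (a * q * M / (b * c)) ^ i
    let G : ℕ → ℂ := fun i =>
      (1 - a * q * M) / ((1 - a * q * M / b) * (1 - a * q * M / c) * (1 - 1 / (q * M))) *
        (W i * ((1 - q ^ i) * (1 - a * q ^ i / b) * (1 - a * q ^ i / c)))
    have hD0 : ∀ i, qpoch (a * q * M) q i ≠ 0 := fun i => by
      have := hD l i; rwa [pow_succ', ← mul_assoc] at this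
    have hW : ∀ i, W (i + 1) * ((1 - q ^ (i + 1)) * (1 - a * q ^ (i + 1) / b) *
        (1 - a * q ^ (i + 1) / c)) = W i * (a * q * M / (b * c) * (1 - a * q ^ i) *
        (1 - b * q ^ i) * (1 - c * q ^ i) * (1 - q ^ i / (q * M)) / (1 - a * q * M * q ^ i)) := by
      intro i
      have n1 : 1 - q ^ (i + 1) ≠ 0 := sub_ne_zero.2 (hq1 i).symm
      have n2 : 1 - a * q ^ (i + 1) / b ≠ 0 := sub_ne_zero.2 (hab i).symm
      have n3 : 1 - a * q ^ (i + 1) / c ≠ 0 := sub_ne_zero.2 (hac i).symm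
      simp only [W, qpoch_succ]
      rw [show q * q ^ i = q ^ (i + 1) by ring,
        show a * q / b * q ^ i = a * q ^ (i + 1) / b by ring,
        show a * q / c * q ^ i = a * q ^ (i + 1) / c by ring,
        show 1 / (q * M) * q ^ i = q ^ i / (q * M) by ring, pow_succ (a * q * M / (b * c))]
      have := h4 i
      have := hP i
      have := hB i
      have := hC i
      have := hD0 i
      generalize 1 - q ^ (i + 1) = y1 at *
      generalize 1 - a * q ^ (i + 1) / b = y2 at *
      generalize 1 - a * q ^ (i + 1) / c = y3 at *
      generalize 1 - a * q * M * q ^ i = y4 at *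
      generalize 1 - q ^ i / (q * M) = y5 at *
      generalize (a * q * M / (b * c)) = y6 at *
      field_simp
    have hT0 : ∀ i, sixPhiFiveTerm a b c q l i =
        (1 - a * (q ^ i) ^ 2) * W i * ((1 - q ^ i / (q * M)) / (1 - 1 / (q * M))) := by
      intro i
      have hs := qpoch_shift (1 / (q * M)) q i
      have e : q ^ (-(l : ℤ)) = 1 / (q * M) * q := by
        rw [zpow_neg, zpow_natCast, ← hM]; field_simp
      have hs' : qpoch (1 / (q * M) * q) q i =
          qpoch (1 / (q * M)) q i * (1 - q ^ i / (q * M)) / (1 - 1 / (q * M)) := by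
        rw [eq_div_iff h3]; linear_combination hs
      simp only [sixPhiFiveTerm, W]
      rw [e, hs', show a * q ^ (l + 1) = a * q * M by rw [hM]; ring, mul_comm 2 i, pow_mul]
      ring
    have hT1 : ∀ i, sixPhiFiveTerm a b c q (l + 1) i =
        (1 - a * (q ^ i) ^ 2) * W i *
          (q ^ i * (1 - a * q * M) / (1 - a * q * M * q ^ i)) := by
      intro i
      have hs := qpoch_shift (a * q * M) q i
      have e : q ^ (-((l + 1 : ℕ) : ℤ)) = 1 / (q * M) := by
        rw [zpow_neg, zpow_natCast, pow_succ', one_div]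
      have h5 := hD (l + 1) i
      rw [show a * q ^ (l + 1 + 1) = a * q * M * q by rw [hM]; ring] at h5
      have hs' : (qpoch (a * q * M * q) q i)⁻¹ =
          (qpoch (a * q * M) q i)⁻¹ * ((1 - a * q * M) / (1 - a * q * M * q ^ i)) := by
        have := h4 i
        have := hD0 i
        generalize qpoch (a * q * M * q) q i = y1 at *
        generalize qpoch (a * q * M) q i = y2 at *
        generalize 1 - a * q * M * q ^ i = y3 at *
        generalize 1 - a * q * M = y4 at *
        field_simp
        linear_combination -hs
      simp only [sixPhiFiveTerm, W]
      rw [e, show a * q ^ (l + 1 + 1) = a * q * M * q by rw [hM]; ring, div_eq_mul_inv _ (_ * _),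
        mul_inv _ (qpoch (a * q * M * q) q i), hs', mul_comm 2 i, pow_mul,
        show a * q * M * q / (b * c) = a * q * M / (b * c) * q by ring, mul_pow]
      ring
    have hG : ∀ i, sixPhiFiveTerm a b c q (l + 1) i - ρ * sixPhiFiveTerm a b c q l i =
        G (i + 1) - G i := by
      intro i
      have := sixPhiFive_certificate hb hc hq hM0 h1 h2 h3 (h4 i)
      simp only [G]
      rw [hW, hT0, hT1]
      linear_combination (W i) * this
    have hsum := Finset.sum_congr (rfl : Finset.range (l + 2) = _) fun i _ => hG i
    rw [Finset.sum_range_sub, Finset.sum_sub_distrib, ← Finset.mul_sum] at hsum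
    have hG0 : G 0 = 0 := by simp [G]
    have hGl : G (l + 2) = 0 := by
      have : qpoch (1 / (q * M)) q (l + 2) = 0 :=
        qpoch_eq_zero (j := l + 1) (by omega) (by rw [pow_succ', ← hM, one_div, inv_mul_cancel₀ (mul_ne_zero hq hM0)])
      simp only [G, W, this, mul_zero, zero_mul, zero_div]
    have hTl : sixPhiFiveTerm a b c q l (l + 1) = 0 := by
      have : qpoch (q ^ (-(l : ℤ))) q (l + 1) = 0 :=
        qpoch_eq_zero (j := l) (by omega) (by rw [← zpow_natCast, ← zpow_add₀ hq]; simp)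
      simp only [sixPhiFiveTerm, this, mul_zero, zero_mul, zero_div]
    rw [hG0, hGl, Finset.sum_range_succ (sixPhiFiveTerm a b c q l), hTl, add_zero, ih,
      sub_zero, sub_eq_zero] at hsum
    rw [hsum, hρ]
    simp only [qpoch_succ]
    rw [← hM, show a * q / (b * c) * M = a * q * M / (b * c) by ring,
        show a * q / b * M = a * q * M / b by ring, show a * q / c * M = a * q * M / c by ring]
    have := hB l
    have := hC l
    generalize 1 - a * q * M / b = y2 at *
    generalize 1 - a * q * M / c = y3 at *
    field_simp

theorem gosper_certificate {q x P K : ℂ} (hq : q ≠ 0) (hx : x ≠ 0) (hP : P ≠ 0) (hK : K ≠ 0)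
    (h2 : 1 - q ^ 2 * P ≠ 0) (h3 : 1 - q ^ 3 * P ≠ 0) (h4 : 1 - q ^ 4 * P ≠ 0) :
    (1 - K / (q ^ 4 * P)) * (1 - K / (q ^ 3 * P)) * (1 - K / (q ^ 2 * P)) /
        ((1 - 1 / (q ^ 4 * P)) * (1 - 1 / (q ^ 3 * P)) * (1 - 1 / (q ^ 2 * P))) -
      (1 - q ^ 2 * x * P) * (1 - q ^ 4 / x * P) / ((1 - q ^ 2 * P) * (1 - q ^ 4 * P)) *
        ((1 - K ^ 3 / (q ^ 3 * P)) / (1 - 1 / (q ^ 3 * P))) =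
    q ^ 5 * P ^ 2 / ((1 - q ^ 2 * P) * (1 - q ^ 4 * P) * (1 - q ^ 3 * P)) *
      ((1 - K ^ 3 / (q ^ 3 * P)) * (1 - x * K) * (1 - q ^ 2 / x * K) / K -
        (1 - K ^ 2) * (1 - q * K ^ 2) * (1 - K / (q ^ 2 * P)) / K) := by
  have e : ∀ j : ℕ, 1 - 1 / (q ^ j * P) = -(1 - q ^ j * P) / (q ^ j * P) := fun j => by
    have := pow_ne_zero j hq
    field_simp
    ring
  rw [e, e, e]
  generalize 1 - q ^ 2 * P = y2 at *
  generalize 1 - q ^ 3 * P = y3 at *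
  generalize 1 - q ^ 4 * P = y4 at *
  field_simp
  ring

noncomputable def gosperTerm (q s x P : ℂ) (k : ℕ) : ℂ :=
  qpoch (1 / P) (q ^ 3) k * (qpoch x q k * qpoch (q ^ 2 / x) q k) /
    (qpoch q q k * qpoch (-q) q k * qpoch (q * s) q k * qpoch (-(q * s)) q k *
      qpoch (1 / (q * P)) q k) * q ^ k

/-- The second `q`-Gosper identity, for a terminating series. -/
theorem gosper_sum {q s : ℂ} (hs : s ^ 2 = q) (hs0 : s ≠ 0) (hs1 : ∀ m : ℤ, m ≠ 0 → s ^ m ≠ 1)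
    {x : ℂ} (hx : x ≠ 0) (n : ℕ) :
    ∑ k ∈ Finset.range (n + 1), gosperTerm q s x (q ^ (3 * n)) k =
      qpoch (q ^ 2 * x) (q ^ 3) n * qpoch (q ^ 4 / x) (q ^ 3) n /
        (qpoch (q ^ 2) (q ^ 3) n * qpoch (q ^ 4) (q ^ 3) n) := by
  have hq : q ≠ 0 := hs ▸ pow_ne_zero 2 hs0
  have hqz : ∀ m : ℤ, q ^ m = s ^ (2 * m) := fun m => by rw [zpow_mul, ← hs]; norm_cast
  have hq1 : ∀ m : ℤ, m ≠ 0 → q ^ m ≠ 1 := fun m hm => by rw [hqz]; exact hs1 _ (by omega)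
  have hqn : ∀ m : ℕ, m ≠ 0 → q ^ m ≠ 1 := fun m hm => by
    rw [← zpow_natCast]; exact hq1 _ (by omega)
  have hqd : ∀ m k : ℕ, m ≠ k → q ^ m / q ^ k ≠ 1 := fun m k hm => by
    rw [← zpow_natCast, ← zpow_natCast, ← zpow_sub₀ hq]; exact hq1 _ (by omega)
  induction n with
  | zero => simp [gosperTerm, qpoch_zero]
  | succ n ih =>
    set P := q ^ (3 * n) with hPdef
    have hP : P ≠ 0 := pow_ne_zero _ hq
    have hPq : ∀ m : ℕ, m ≠ 0 → 1 - q ^ m * P ≠ 0 := fun m hm => by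
      rw [hPdef, ← pow_add]; exact sub_ne_zero.2 (hqn _ (by omega)).symm
    have hQ : ∀ k, qpoch q q k * qpoch (-q) q k * qpoch (q * s) q k * qpoch (-(q * s)) q k ≠ 0 := by
      intro k
      have sq : ∀ j : ℕ, (s ^ j) ^ 2 = q ^ j := fun j => by rw [← pow_mul, mul_comm, pow_mul, hs]
      refine mul_ne_zero (mul_ne_zero (mul_ne_zero ?_ ?_) ?_) ?_ <;>
        refine qpoch_ne_zero fun j h => ?_
      · exact hqn (j + 1) (by omega) (by rw [pow_succ', h])
      · exact hqn (2 * (j + 1)) (by omega) (by linear_combination (1 - q * q ^ j) * h)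
      · exact hqn (2 * j + 3) (by omega)
          (by linear_combination (1 + q * s * q ^ j) * h - q ^ (2 * j + 2) * hs)
      · exact hqn (2 * j + 3) (by omega)
          (by linear_combination (1 - q * s * q ^ j) * h - q ^ (2 * j + 2) * hs)
    have hE : ∀ k m, k ≤ n + 1 → m ≠ 0 → qpoch (1 / (q ^ m * P)) q k ≠ 0 := by
      intro k m hk hm
      refine Finset.prod_ne_zero_iff.2 fun j hj => sub_ne_zero.2 (Ne.symm ?_)
      have hj := Finset.mem_range.1 hj
      rw [hPdef, ← pow_add, one_div_mul_eq_div]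
      exact hqd _ _ (by omega)
    have hPm : ∀ m : ℕ, m ≠ 0 → 1 - 1 / (q ^ m * P) ≠ 0 := fun m hm => by
      have := hE 1 m (by omega) hm
      simpa [qpoch] using this
    let U : ℕ → ℂ := fun k =>
      qpoch (1 / (q ^ 3 * P)) (q ^ 3) k * (qpoch x q k * qpoch (q ^ 2 / x) q k) /
        (qpoch q q k * qpoch (-q) q k * qpoch (q * s) q k * qpoch (-(q * s)) q k *
        qpoch (1 / (q ^ 1 * P)) q k) * q ^ k
    let g := q ^ 5 * P ^ 2 / ((1 - q ^ 2 * P) * (1 - q ^ 4 * P) * (1 - q ^ 3 * P))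
    let B := (1 - q ^ 2 * x * P) * (1 - q ^ 4 / x * P) / ((1 - q ^ 2 * P) * (1 - q ^ 4 * P))
    let G : ℕ → ℂ := fun k =>
      g * (U k * ((1 - (q ^ k) ^ 2) * (1 - q * (q ^ k) ^ 2) * (1 - q ^ k / (q ^ 2 * P)) / q ^ k))
    have hU : ∀ k ≤ n, U (k + 1) * ((1 - (q ^ (k + 1)) ^ 2) * (1 - q * (q ^ (k + 1)) ^ 2) *
        (1 - q ^ (k + 1) / (q ^ 2 * P)) / q ^ (k + 1)) =
        U k * ((1 - (q ^ k) ^ 3 / (q ^ 3 * P)) * (1 - x * q ^ k) * (1 - q ^ 2 / x * q ^ k) /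
          q ^ k) := by
      intro k hk
      have h1 := hQ k
      have h2 := hQ (k + 1)
      have h3 := hE k 1 (by omega) (by omega)
      have h4 := hE (k + 1) 1 (by omega) (by omega)
      simp only [U]
      simp only [qpoch_succ] at h2 h4 ⊢
      have e1 : (1 - (q ^ (k + 1)) ^ 2) * (1 - q * (q ^ (k + 1)) ^ 2) =
          (1 - q * q ^ k) * (1 - -q * q ^ k) * (1 - q * s * q ^ k) * (1 - -(q * s) * q ^ k) := by
        rw [show q * (q ^ (k + 1)) ^ 2 = s ^ 2 * (q ^ (k + 1)) ^ 2 by rw [hs]]; ring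
      have e2 : 1 - q ^ (k + 1) / (q ^ 2 * P) = 1 - 1 / (q ^ 1 * P) * q ^ k := by
        field_simp; ring
      have e3 : 1 - (q ^ k) ^ 3 / (q ^ 3 * P) = 1 - 1 / (q ^ 3 * P) * (q ^ 3) ^ k := by
        rw [← pow_mul, ← pow_mul, mul_comm k 3]; ring
      rw [e1, e2, e3]
      simp only [mul_ne_zero_iff] at h1 h2 h4
      obtain ⟨⟨⟨h11, h12⟩, h13⟩, h14⟩ := h1
      obtain ⟨⟨⟨⟨_, h21⟩, ⟨_, h22⟩⟩, ⟨_, h23⟩⟩, ⟨_, h24⟩⟩ := h2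
      obtain ⟨_, h41⟩ := h4
      rw [pow_succ q k]
      have hqk := pow_ne_zero k hq
      generalize 1 - q * q ^ k = y1 at *
      generalize 1 - -q * q ^ k = y2 at *
      generalize 1 - q * s * q ^ k = y3 at *
      generalize 1 - -(q * s) * q ^ k = y4 at *
      generalize 1 - 1 / (q ^ 1 * P) * q ^ k = y5 at *
      generalize 1 - 1 / (q ^ 3 * P) * (q ^ 3) ^ k = y6 at *
      generalize 1 - q ^ 2 / x * q ^ k = y7 at *
      generalize q ^ k = y8 at *
      generalize qpoch (1 / (q ^ 1 * P)) q k = z1 at *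
      generalize qpoch (1 / (q ^ 3 * P)) (q ^ 3) k = z2 at *
      generalize qpoch (q ^ 2 / x) q k = z3 at *
      field_simp
    have hF0 : ∀ k, gosperTerm q s x P k =
        U k * ((1 - (q ^ k) ^ 3 / (q ^ 3 * P)) / (1 - 1 / (q ^ 3 * P))) := by
      intro k
      have h := qpoch_shift (1 / (q ^ 3 * P)) (q ^ 3) k
      rw [show 1 / (q ^ 3 * P) * q ^ 3 = 1 / P by field_simp,
        show 1 / (q ^ 3 * P) * (q ^ 3) ^ k = (q ^ k) ^ 3 / (q ^ 3 * P) by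
          rw [← pow_mul, ← pow_mul, mul_comm k 3]; ring, mul_comm (1 - _)] at h
      rw [gosperTerm, eq_div_of_mul_eq (hPm 3 (by omega)) h]
      simp only [U, pow_one]
      ring
    have hF1 : ∀ k ≤ n + 1, gosperTerm q s x (q ^ (3 * (n + 1))) k =
        U k * ((1 - q ^ k / (q ^ 4 * P)) * (1 - q ^ k / (q ^ 3 * P)) * (1 - q ^ k / (q ^ 2 * P)) /
        ((1 - 1 / (q ^ 4 * P)) * (1 - 1 / (q ^ 3 * P)) * (1 - 1 / (q ^ 2 * P)))) := by
      intro k hk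
      have ha := qpoch_shift (1 / (q ^ 4 * P)) q k
      have hb := qpoch_shift (1 / (q ^ 3 * P)) q k
      have hc := qpoch_shift (1 / (q ^ 2 * P)) q k
      rw [show 1 / (q ^ 4 * P) * q = 1 / (q ^ 3 * P) by field_simp, one_div_mul_eq_div] at ha
      rw [show 1 / (q ^ 3 * P) * q = 1 / (q ^ 2 * P) by field_simp, one_div_mul_eq_div] at hb
      rw [show 1 / (q ^ 2 * P) * q = 1 / (q ^ 1 * P) by field_simp, one_div_mul_eq_div] at hc
      have h : (qpoch (1 / (q ^ 4 * P)) q k)⁻¹ = (qpoch (1 / (q ^ 1 * P)) q k)⁻¹ *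
          ((1 - q ^ k / (q ^ 4 * P)) * (1 - q ^ k / (q ^ 3 * P)) * (1 - q ^ k / (q ^ 2 * P)) /
          ((1 - 1 / (q ^ 4 * P)) * (1 - 1 / (q ^ 3 * P)) * (1 - 1 / (q ^ 2 * P)))) := by
        have n1 := hE k 1 hk (by omega)
        have n2 := hE k 2 hk (by omega)
        have n3 := hE k 3 hk (by omega)
        have n4 := hE k 4 hk (by omega)
        have m2 := hPm 2 (by omega)
        have m3 := hPm 3 (by omega)
        have m4 := hPm 4 (by omega)
        generalize qpoch (1 / (q ^ 1 * P)) q k = z1 at *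
        generalize qpoch (1 / (q ^ 2 * P)) q k = z2 at *
        generalize qpoch (1 / (q ^ 3 * P)) q k = z3 at *
        generalize qpoch (1 / (q ^ 4 * P)) q k = z4 at *
        generalize 1 - 1 / (q ^ 2 * P) = y2 at *
        generalize 1 - 1 / (q ^ 3 * P) = y3 at *
        generalize 1 - 1 / (q ^ 4 * P) = y4 at *
        generalize 1 - q ^ k / (q ^ 2 * P) = w2 at *
        generalize 1 - q ^ k / (q ^ 3 * P) = w3 at *
        generalize 1 - q ^ k / (q ^ 4 * P) = w4 at *
        field_simp
        linear_combination y4 * y3 * hc + y4 * w2 * hb + w2 * w3 * ha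
      have hP3 : q ^ (3 * (n + 1)) = q ^ 3 * P := by rw [hPdef]; ring
      rw [gosperTerm, hP3, show q * (q ^ 3 * P) = q ^ 4 * P by ring, div_eq_mul_inv,
        mul_inv _ (qpoch (1 / (q ^ 4 * P)) q k), h]
      simp only [U]
      ring
    have hcert : ∀ k ≤ n + 1, gosperTerm q s x (q ^ (3 * (n + 1))) k - B * gosperTerm q s x P k =
        g * (U k * ((1 - (q ^ k) ^ 3 / (q ^ 3 * P)) * (1 - x * q ^ k) * (1 - q ^ 2 / x * q ^ k) /
          q ^ k)) - G k := by
      intro k hk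
      have := gosper_certificate hq hx hP (pow_ne_zero k hq) (hPq 2 (by omega)) (hPq 3 (by omega))
        (hPq 4 (by omega))
      rw [hF0, hF1 k hk]
      simp only [G, g, B]
      linear_combination U k * this
    have hsum : ∑ k ∈ Finset.range (n + 1), (gosperTerm q s x (q ^ (3 * (n + 1))) k -
        B * gosperTerm q s x P k) = G (n + 1) - G 0 := by
      rw [← Finset.sum_range_sub]
      refine Finset.sum_congr rfl fun k hk => ?_
      have hk := Finset.mem_range.1 hk
      rw [hcert k (by omega), ← hU k (by omega)]
    have hG0 : G 0 = 0 := by simp [G]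
    have hlast := hcert (n + 1) le_rfl
    have hF0l : gosperTerm q s x P (n + 1) = 0 := by
      have : qpoch (1 / P) (q ^ 3) (n + 1) = 0 :=
        qpoch_eq_zero (j := n) (by omega) (by rw [← pow_mul, ← hPdef, one_div_mul_cancel hP])
      simp only [gosperTerm, this, zero_mul, zero_div]
    have hv : (q ^ (n + 1)) ^ 3 / (q ^ 3 * P) = 1 := by
      rw [hPdef, div_eq_one_iff_eq (mul_ne_zero (pow_ne_zero _ hq) (pow_ne_zero _ hq))]; ring
    rw [hF0l, hv, sub_self] at hlast
    rw [Finset.sum_sub_distrib, ← Finset.mul_sum, ih, hG0] at hsum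
    rw [Finset.sum_range_succ, eq_add_of_sub_eq hsum, ← sub_zero (gosperTerm _ _ _ _ _),
      ← mul_zero B, hlast]
    simp only [qpoch_succ, B]
    rw [← pow_mul, ← hPdef]
    generalize 1 - q ^ 2 * P = y2
    generalize 1 - q ^ 4 * P = y4
    ring

theorem mul_div_cancel_common {u v w : ℂ} (hu : u ≠ 0) (hv : v ≠ 0) (hw : w ≠ 0)
    (c p y z r t f g d b e j o m : ℂ) :
    c * p * (y / z) * (r * u * t) / (f * v * g) * (d * b / u * (e * v / (j * o)) / m) =
      d * e / (z * m) * (y * (t * b * w * r) / (f * j * w * g) * (c * p / o)) := by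
  have h : ∀ A : ℂ, A * (u * u⁻¹) * (v * v⁻¹) = A * (w * w⁻¹) := fun A => by
    rw [mul_inv_cancel₀ hu, mul_inv_cancel₀ hv, mul_inv_cancel₀ hw, mul_one]
  linear_combination h (c * p * y * r * t * d * b * e / (z * f * g * j * o * m))

/-- Expansion of a `q`-Pochhammer quotient with shift `l` in quotients with shift `0`. -/
theorem qpoch_product_expansion {q s x : ℂ} (hs : s ^ 2 = q) (hs0 : s ≠ 0)
    (hs1 : ∀ m : ℤ, m ≠ 0 → s ^ m ≠ 1) (hx : x ≠ 0) (hxs : ∀ m : ℤ, x ^ 2 * s ^ m ≠ 1)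
    (l k : ℕ) :
    qpoch x q k * qpoch (q ^ (2 - l : ℤ) / x) q k / qpoch (-(s * q ^ (1 - l : ℤ))) q k =
      (qpoch (x / q) q l * qpoch (-(x / s)) q l) / (qpoch (x ^ 2 / q) q l * qpoch (-(1 / s)) q l) *
        ∑ i ∈ Finset.range (l + 1),
          (-1 : ℂ) ^ i * (q ^ (l * i) / s ^ i) *
            ((1 - x ^ 2 * q ^ (2 * (i : ℤ) - 2)) / (1 - x ^ 2 / q ^ 2)) *
            (qpoch (q ^ (-(l : ℤ))) q i * qpoch x q i * qpoch (x ^ 2 / q ^ 2) q i) /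
            (qpoch q q i * qpoch (x / q) q i * qpoch (x ^ 2 * q ^ ((l : ℤ) - 1)) q i) *
            (qpoch (q ^ i * x) q k * qpoch (q ^ 2 / (q ^ i * x)) q k / qpoch (-(q * s)) q k) := by
  have hq : q ≠ 0 := hs ▸ pow_ne_zero 2 hs0
  have hqz : ∀ m : ℤ, q ^ m = s ^ (2 * m) := fun m => by rw [zpow_mul, ← hs]; norm_cast
  have hq1 : ∀ m : ℤ, m ≠ 0 → q ^ m ≠ 1 := fun m hm => by rw [hqz]; exact hs1 _ (by omega)
  have hxq : ∀ m : ℤ, x * q ^ m ≠ 1 := fun m h => hxs (2 * (2 * m)) (by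
    rw [mul_comm 2 (2 * m), zpow_mul, ← hqz, zpow_ofNat, ← mul_pow, h, one_pow])
  have hx2q : ∀ m : ℤ, x ^ 2 * q ^ m ≠ 1 := fun m => by rw [hqz]; exact hxs _
  have hxsq : ∀ m : ℤ, x / s * q ^ m ≠ -1 := fun m h => hxs (2 * (2 * m - 1)) (by
    rw [mul_comm 2 (2 * m - 1), zpow_mul, zpow_sub₀ hs0, ← hqz, zpow_ofNat, ← mul_pow, zpow_one,
      mul_div_assoc', ← div_mul_eq_mul_div, h]; norm_num)
  have hsq : ∀ m : ℤ, 1 / s * q ^ m ≠ -1 := fun m h => hs1 (2 * (2 * m - 1)) (by omega) (by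
    rw [mul_comm 2 (2 * m - 1), zpow_mul, zpow_sub₀ hs0, ← hqz, zpow_ofNat, zpow_one,
      div_eq_mul_one_div, mul_comm, h]; norm_num)
  have Pq : ∀ i, qpoch q q i ≠ 0 := fun i => qpoch_ne_zero fun j h =>
    hq1 (j + 1) (by omega) (by rw [zpow_add₀ hq, zpow_natCast, zpow_one, mul_comm, h])
  have Px : ∀ i, qpoch x q i ≠ 0 := fun i => qpoch_ne_zero fun j h =>
    hxq j (by rw [zpow_natCast, h])
  have Pxq : ∀ i, qpoch (x / q) q i ≠ 0 := fun i => qpoch_ne_zero fun j h =>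
    hxq (j - 1) (by rw [zpow_sub₀ hq, zpow_natCast, zpow_one, ← h]; ring)
  have Pxk : ∀ i, qpoch (x * q ^ (-1 - k : ℤ)) q i ≠ 0 := fun i => qpoch_ne_zero fun j h =>
    hxq (-1 - k + j) (by rw [zpow_add₀ hq, zpow_natCast, ← h]; ring)
  have Pxs : ∀ i, qpoch (-(x / s)) q i ≠ 0 := fun i => qpoch_ne_zero fun j h =>
    hxsq j (by rw [zpow_natCast, ← h]; ring)
  have Ps : ∀ i, qpoch (-(1 / s)) q i ≠ 0 := fun i => qpoch_ne_zero fun j h =>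
    hsq j (by rw [zpow_natCast]; linear_combination -h)
  have Psk : ∀ i, qpoch (-(1 / s) * q ^ (-(k : ℤ))) q i ≠ 0 := fun i => qpoch_ne_zero fun j h =>
    hsq (-k + j) (by rw [zpow_add₀ hq, zpow_natCast]; linear_combination -h)
  have Pqs : ∀ i : ℕ, qpoch (-(s * q ^ (1 - i : ℤ))) q k ≠ 0 := fun i =>
    qpoch_ne_zero fun j h => hsq (2 - i + j) (by
      rw [show (2 - i + j : ℤ) = 1 + ((1 - i) + j) by ring, zpow_add₀ hq, zpow_add₀ hq _ (j : ℤ),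
        zpow_natCast, zpow_one]
      have hs' : 1 / s * q = s := by rw [← hs]; field_simp
      linear_combination (q ^ (1 - i : ℤ) * q ^ j) * hs' - h)
  have Px2 : qpoch (x ^ 2 / q) q l ≠ 0 := qpoch_ne_zero fun j h =>
    hx2q (j - 1) (by rw [zpow_sub₀ hq, zpow_natCast, zpow_one, ← h]; ring)
  have ha : 1 - x ^ 2 / q ^ 2 ≠ 0 := sub_ne_zero.2 fun h =>
    hx2q (-2) (by rw [h, div_eq_mul_inv, zpow_neg]; norm_cast)
  have hqk : q ^ (-1 - k : ℤ) = 1 / (q * q ^ k) := by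
    rw [zpow_sub₀ hq, zpow_natCast, zpow_neg, zpow_one]; field_simp
  have e1 : x ^ 2 / q ^ 2 * q / (x * q ^ k) = x * q ^ (-1 - k : ℤ) := by
    rw [hqk]; field_simp
  have e2 : x ^ 2 / q ^ 2 * q / (-(x / s)) = -(x / s) := by
    rw [← hs]; field_simp
  have e3 : x ^ 2 / q ^ 2 * q ^ (l + 1) = x ^ 2 * q ^ ((l : ℤ) - 1) := by
    rw [zpow_sub₀ hq, zpow_natCast, zpow_one]; field_simp; ring
  have e4 : x ^ 2 / q ^ 2 * q / (x * q ^ k * -(x / s)) = -(1 / s) * q ^ (-(k : ℤ)) := by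
    rw [zpow_neg, zpow_natCast, ← hs]; field_simp
  have e5 : x ^ 2 / q ^ 2 * q ^ (l + 1) / (x * q ^ k * -(x / s)) = -1 * (q ^ l / s) / q ^ k := by
    rw [← hs]; field_simp; ring
  have e6 : x ^ 2 / q ^ 2 * q = x ^ 2 / q := by field_simp
  have hsum := sixPhiFive_sum (a := x ^ 2 / q ^ 2) (b := x * q ^ k) (c := -(x / s)) (q := q)
    (mul_ne_zero hx (pow_ne_zero _ hq)) (neg_ne_zero.2 (div_ne_zero hx hs0)) hq
    (fun m => by rw [← zpow_natCast]; exact hq1 _ (by omega))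
    (fun m h => hx2q (m - 1) (by
      rw [zpow_sub₀ hq, zpow_natCast, zpow_one, ← h]; field_simp; ring))
    (fun m h => hxq (m - 1 - k) (by
      rw [zpow_sub₀ hq, zpow_sub₀ hq, zpow_natCast, zpow_natCast, zpow_one, ← h]; field_simp; ring))
    (fun m h => hxsq m (by
      rw [pow_succ' q m, ← mul_assoc (x ^ 2 / q ^ 2), ← div_mul_eq_mul_div, e2] at h
      rw [zpow_natCast]
      linear_combination -h)) l
  rw [e1, e2, e4, e6] at hsum
  have hterm : ∀ i, (-1 : ℂ) ^ i * (q ^ (l * i) / s ^ i) *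
      ((1 - x ^ 2 * q ^ (2 * (i : ℤ) - 2)) / (1 - x ^ 2 / q ^ 2)) *
      (qpoch (q ^ (-(l : ℤ))) q i * qpoch x q i * qpoch (x ^ 2 / q ^ 2) q i) /
      (qpoch q q i * qpoch (x / q) q i * qpoch (x ^ 2 * q ^ ((l : ℤ) - 1)) q i) *
      (qpoch (q ^ i * x) q k * qpoch (q ^ 2 / (q ^ i * x)) q k / qpoch (-(q * s)) q k) =
      qpoch x q k * qpoch (q ^ 2 / x) q k / ((1 - x ^ 2 / q ^ 2) * qpoch (-(q * s)) q k) *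
        sixPhiFiveTerm (x ^ 2 / q ^ 2) (x * q ^ k) (-(x / s)) q l i := by
    intro i
    have h1 : qpoch (q ^ i * x) q k = qpoch x q k * qpoch (x * q ^ k) q i / qpoch x q i := by
      rw [eq_div_iff (Px i), ← qpoch_add, mul_comm _ x, mul_comm, ← qpoch_add, add_comm]
    have h2 : qpoch (q ^ 2 / (q ^ i * x)) q k = qpoch (q ^ 2 / x) q k * qpoch (x / q) q i /
        (qpoch (x * q ^ (-1 - k : ℤ)) q i * q ^ (k * i)) := by
      rw [eq_div_iff (mul_ne_zero (Pxk i) (pow_ne_zero _ hq)), ← qpoch_reflect hq hx, mul_assoc,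
        zpow_sub₀ hq 2 (i : ℤ), zpow_natCast, zpow_ofNat, div_div]
    have h3 : x ^ 2 * q ^ (2 * (i : ℤ) - 2) = x ^ 2 / q ^ 2 * q ^ (2 * i) := by
      rw [zpow_sub₀ hq, show (2 * (i : ℤ)) = ((2 * i : ℕ) : ℤ) by push_cast; ring, zpow_natCast,
        zpow_ofNat]
      ring
    have n1 := Px i
    have n2 := Pxq i
    have n3 := Pxs i
    rw [sixPhiFiveTerm, e1, e2, e5, e3, h1, h2, h3, div_pow, mul_pow, div_pow, ← pow_mul, ← pow_mul]
    exact mul_div_cancel_common n1 n2 n3 _ _ _ _ _ _ _ _ _ _ _ _ _ _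
  rw [Finset.sum_congr rfl fun i _ => hterm i, ← Finset.mul_sum, hsum]
  have r1 : qpoch (q ^ (2 - l : ℤ) / x) q k = qpoch (q ^ 2 / x) q k * qpoch (x / q) q l /
      (qpoch (x * q ^ (-1 - k : ℤ)) q l * q ^ (k * l)) := by
    rw [eq_div_iff (mul_ne_zero (Pxk l) (pow_ne_zero _ hq)), ← qpoch_reflect hq hx, mul_assoc]
  have r2 : qpoch (-(s * q ^ (1 - l : ℤ))) q k =
      qpoch (-(q * s)) q k * qpoch (-(1 / s)) q l /
        (qpoch (-(1 / s) * q ^ (-(k : ℤ))) q l * q ^ (k * l)) := by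
    have := qpoch_reflect hq (x := -(q / s)) (neg_ne_zero.2 (div_ne_zero hq hs0)) k l
    rw [show q ^ (2 - l : ℤ) / -(q / s) = -(s * q ^ (1 - l : ℤ)) by
        rw [show (2 - l : ℤ) = 1 + (1 - l) by ring, zpow_add₀ hq, zpow_one]; field_simp,
      show -(q / s) * q ^ (-1 - k : ℤ) = -(1 / s) * q ^ (-(k : ℤ)) by
        rw [hqk, zpow_neg, zpow_natCast]; field_simp,
      show q ^ 2 / -(q / s) = -(q * s) by field_simp,
      show -(q / s) / q = -(1 / s) by field_simp, mul_assoc] at this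
    rw [eq_div_iff (mul_ne_zero (Psk l) (pow_ne_zero _ hq)), this]
  have n1 := Pqs 0
  rw [show -(s * q ^ (1 - (0 : ℕ) : ℤ)) = -(q * s) by simp [mul_comm]] at n1
  have n2 := Ps l
  have n3 := Psk l
  have n4 := Pxk l
  have n5 := Pxs l
  rw [r1, r2]
  generalize qpoch (-(q * s)) q k = y1 at *
  generalize qpoch (-(1 / s)) q l = y2 at *
  generalize qpoch (-(1 / s) * q ^ (-(k : ℤ))) q l = y3 at *
  generalize qpoch (x * q ^ (-1 - k : ℤ)) q l = y4 at *
  generalize qpoch (-(x / s)) q l = y5 at *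
  generalize 1 - x ^ 2 / q ^ 2 = y6 at *
  generalize qpoch (x ^ 2 / q) q l = y7 at *
  generalize qpoch (x / q) q l = y8 at *
  generalize qpoch (q ^ 2 / x) q k = y9 at *
  field_simp

/-- The left-hand side of the extended second `q`-Gosper identity, with `s` a
square root of `q`. -/
noncomputable def gosperExtensionLeft (l n : ℕ) (q x s : ℂ) : ℂ :=
  ∑ k ∈ Finset.range (n + 1),
    qpoch (q ^ (-(3 * n : ℤ))) (q ^ 3) k *
      (qpoch x q k * qpoch (q ^ (2 - l : ℤ) / x) q k) /
      (qpoch q q k * qpoch (-q) q k * qpoch (q * s) q k * qpoch (-(s * q ^ (1 - l : ℤ))) q k *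
        qpoch (q ^ (-1 - 3 * n : ℤ)) q k) * q ^ k

/-- The right-hand side of the extended second `q`-Gosper identity. -/
noncomputable def gosperExtensionRight (l n : ℕ) (q x s : ℂ) : ℂ :=
  (qpoch (x / q) q l * qpoch (-(x / s)) q l) / (qpoch (x ^ 2 / q) q l * qpoch (-(1 / s)) q l) *
    ∑ i ∈ Finset.range (l + 1),
      (-1 : ℂ) ^ i * (q ^ (l * i) / s ^ i) *
        ((1 - x ^ 2 * q ^ (2 * (i : ℤ) - 2)) / (1 - x ^ 2 / q ^ 2)) *
        (qpoch (q ^ (-(l : ℤ))) q i * qpoch x q i * qpoch (x ^ 2 / q ^ 2) q i) /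
        (qpoch q q i * qpoch (x / q) q i * qpoch (x ^ 2 * q ^ ((l : ℤ) - 1)) q i) *
        ((qpoch (q ^ (2 + i) * x) (q ^ 3) n * qpoch (q ^ (4 - i : ℤ) / x) (q ^ 3) n) /
          (qpoch (q ^ 2) (q ^ 3) n * qpoch (q ^ 4) (q ^ 3) n))

/-- The identity for generic parameters. -/
theorem gosperExtension_of_generic (l n : ℕ) {q s x : ℂ} (hs : s ^ 2 = q) (hs0 : s ≠ 0)
    (hs1 : ∀ m : ℤ, m ≠ 0 → s ^ m ≠ 1) (hx : x ≠ 0) (hxs : ∀ m : ℤ, x ^ 2 * s ^ m ≠ 1) :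
    gosperExtensionLeft l n q x s = gosperExtensionRight l n q x s := by
  have hq : q ≠ 0 := hs ▸ pow_ne_zero 2 hs0
  have hP : q ^ (-(3 * n : ℤ)) = 1 / q ^ (3 * n) := by
    rw [zpow_neg, one_div]; norm_cast
  have hP' : q ^ (-1 - 3 * n : ℤ) = 1 / (q * q ^ (3 * n)) := by
    rw [sub_eq_add_neg, zpow_add₀ hq, hP, zpow_neg, zpow_one]; field_simp
  set C := (qpoch (x / q) q l * qpoch (-(x / s)) q l) /
    (qpoch (x ^ 2 / q) q l * qpoch (-(1 / s)) q l) with hC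
  set c : ℕ → ℂ := fun i => (-1 : ℂ) ^ i * (q ^ (l * i) / s ^ i) *
        ((1 - x ^ 2 * q ^ (2 * (i : ℤ) - 2)) / (1 - x ^ 2 / q ^ 2)) *
        (qpoch (q ^ (-(l : ℤ))) q i * qpoch x q i * qpoch (x ^ 2 / q ^ 2) q i) /
        (qpoch q q i * qpoch (x / q) q i * qpoch (x ^ 2 * q ^ ((l : ℤ) - 1)) q i) with hc
  have hexp : ∀ k, qpoch x q k * qpoch (q ^ (2 - l : ℤ) / x) q k /
      qpoch (-(s * q ^ (1 - l : ℤ))) q k = C * ∑ i ∈ Finset.range (l + 1),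
        c i * (qpoch (q ^ i * x) q k * qpoch (q ^ 2 / (q ^ i * x)) q k / qpoch (-(q * s)) q k) :=
    qpoch_product_expansion hs hs0 hs1 hx hxs l
  have hR : gosperExtensionRight l n q x s = C * ∑ i ∈ Finset.range (l + 1), c i *
      ∑ k ∈ Finset.range (n + 1), gosperTerm q s (q ^ i * x) (q ^ (3 * n)) k := by
    rw [gosperExtensionRight, ← hC]
    congr 1
    refine Finset.sum_congr rfl fun i _ => ?_
    rw [gosper_sum hs hs0 hs1 (mul_ne_zero (pow_ne_zero i hq) hx), zpow_sub₀ hq 4, zpow_natCast,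
      zpow_ofNat, div_div, ← mul_assoc (q ^ 2), ← pow_add]
  have hL : ∀ k, qpoch (q ^ (-(3 * n : ℤ))) (q ^ 3) k *
      (qpoch x q k * qpoch (q ^ (2 - l : ℤ) / x) q k) /
      (qpoch q q k * qpoch (-q) q k * qpoch (q * s) q k * qpoch (-(s * q ^ (1 - l : ℤ))) q k *
        qpoch (q ^ (-1 - 3 * n : ℤ)) q k) * q ^ k =
      C * ∑ i ∈ Finset.range (l + 1), c i * gosperTerm q s (q ^ i * x) (q ^ (3 * n)) k := by
    intro k
    rw [show ∀ a b d e f g h m : ℂ, a * b / (d * e * f * g * h) * m =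
      a * m / (d * e * f * h) * (b / g) from fun _ _ _ _ _ _ _ _ => by ring, hexp, mul_left_comm,
      Finset.mul_sum, hP, hP']
    congr 1
    refine Finset.sum_congr rfl fun i _ => ?_
    rw [gosperTerm]
    ring
  rw [hR, gosperExtensionLeft, Finset.sum_congr rfl fun k _ => hL k, ← Finset.mul_sum,
    Finset.sum_comm]
  simp_rw [Finset.mul_sum]

theorem ContinuousAt.qpoch {a q : ℝ → ℂ} {t : ℝ} (ha : ContinuousAt a t) (hq : ContinuousAt q t)
    (k : ℕ) : ContinuousAt (fun t => qpoch (a t) (q t) k) t := by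
  unfold _root_.qpoch
  fun_prop

/-- Along a suitable curve through `(s, x)` the generic parameters are dense. -/
theorem dense_generic_parameters {s x : ℂ} (hs : s ≠ 0) (hx : x ≠ 0) :
    Dense {t : ℝ | (∀ m : ℤ, m ≠ 0 → (s * Complex.exp t) ^ m ≠ 1) ∧
      ∀ m : ℤ, (x * Complex.exp (√2 * t : ℝ)) ^ 2 * (s * Complex.exp t) ^ m ≠ 1} := by
  have hcount : (insert (-Real.log ‖s‖) (Set.range fun m : ℤ =>
      -(2 * Real.log ‖x‖ + m * Real.log ‖s‖) / (2 * √2 + m))).Countable :=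
    (Set.countable_range _).insert _
  refine (hcount.dense_compl ℝ).mono fun t (ht : ¬ _) => ⟨fun m hm h => ht (Or.inl ?_),
    fun m h => ht (Or.inr ⟨m, ?_⟩)⟩
  · have h' := congrArg (fun z => Real.log ‖z‖) h
    simp only [norm_zpow, norm_mul, Complex.norm_exp, Complex.ofReal_re, Real.log_zpow, norm_one,
      Real.log_one, Real.log_mul (norm_ne_zero_iff.2 hs) (Real.exp_ne_zero _), Real.log_exp] at h'
    have hm' : (m : ℝ) ≠ 0 := Int.cast_ne_zero.2 hm
    have := (mul_eq_zero.1 h').resolve_left hm'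
    linarith
  · have h' := congrArg (fun z => Real.log ‖z‖) h
    have h1 : ‖x‖ * Real.exp (√2 * t) ≠ 0 :=
      mul_ne_zero (norm_ne_zero_iff.2 hx) (Real.exp_ne_zero _)
    have h2 : ‖s‖ * Real.exp t ≠ 0 := mul_ne_zero (norm_ne_zero_iff.2 hs) (Real.exp_ne_zero _)
    simp only [norm_zpow, norm_mul, norm_pow, Complex.norm_exp, Complex.ofReal_re, norm_one,
      Real.log_one, Real.log_mul (pow_ne_zero 2 h1) (zpow_ne_zero m h2), Real.log_pow,
      Real.log_zpow, Real.log_mul (norm_ne_zero_iff.2 hx) (Real.exp_ne_zero _),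
      Real.log_mul (norm_ne_zero_iff.2 hs) (Real.exp_ne_zero _), Real.log_exp] at h'
    have hirr : 2 * √2 + m ≠ 0 := fun h => irrational_sqrt_two
      ⟨-m / 2, by push_cast; linarith⟩
    show -(2 * Real.log ‖x‖ + m * Real.log ‖s‖) / (2 * √2 + m) = t
    rw [div_eq_iff hirr]
    push_cast at h'
    linarith

theorem q_gosper_second_extension (ℓ n : ℕ) (q x s : ℂ) (hs : s ^ 2 = q)
    (hq : q ≠ 0) (hx : x ≠ 0)
    (hden : ∀ k ≤ n,
      qpoch q q k * qpoch (-q) q k * qpoch (q*s) q k * qpoch (-(s * q ^ (1 - ℓ : ℤ))) q k *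
        qpoch (q ^ (-1 - 3*n : ℤ)) q k ≠ 0)
    (hdenℓ : qpoch (x^2 / q) q ℓ * qpoch (-(1/s)) q ℓ ≠ 0)
    (hdeni : ∀ i ≤ ℓ,
      qpoch q q i * qpoch (x/q) q i * qpoch (x^2 * q ^ ((ℓ : ℤ) - 1)) q i ≠ 0)
    (hx2 : 1 - x^2 / q^2 ≠ 0)
    (hden2 : qpoch (q^2) (q^3) n * qpoch (q^4) (q^3) n ≠ 0) :
    ∑ k ∈ Finset.range (n+1),
      qpoch (q ^ (-(3*n : ℤ))) (q^3) k *
        (qpoch x q k * qpoch (q ^ (2 - ℓ : ℤ) / x) q k) /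
        (qpoch q q k * qpoch (-q) q k * qpoch (q*s) q k * qpoch (-(s * q ^ (1 - ℓ : ℤ))) q k *
          qpoch (q ^ (-1 - 3*n : ℤ)) q k) * q^k
      = (qpoch (x/q) q ℓ * qpoch (-(x/s)) q ℓ) / (qpoch (x^2 / q) q ℓ * qpoch (-(1/s)) q ℓ) *
        ∑ i ∈ Finset.range (ℓ+1),
          (-1 : ℂ)^i * (q^(ℓ*i) / s^i) *
            ((1 - x^2 * q ^ (2*(i : ℤ) - 2)) / (1 - x^2 / q^2)) *
            (qpoch (q ^ (-(ℓ : ℤ))) q i * qpoch x q i * qpoch (x^2 / q^2) q i) /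
            (qpoch q q i * qpoch (x/q) q i * qpoch (x^2 * q ^ ((ℓ : ℤ) - 1)) q i) *
            ((qpoch (q^(2+i)*x) (q^3) n * qpoch (q ^ (4 - i : ℤ) / x) (q^3) n) /
              (qpoch (q^2) (q^3) n * qpoch (q^4) (q^3) n)) := by
  have hs0 : s ≠ 0 := by rintro rfl; exact hq (by rw [← hs]; norm_num)
  obtain ⟨S, hS⟩ : ∃ S : ℝ → ℂ, S = fun t => s * Complex.exp (t : ℝ) := ⟨_, rfl⟩
  obtain ⟨X, hX⟩ : ∃ X : ℝ → ℂ, X = fun t => x * Complex.exp (√2 * t : ℝ) := ⟨_, rfl⟩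
  obtain ⟨Q, hQ⟩ : ∃ Q : ℝ → ℂ, Q = fun t => S t ^ 2 := ⟨_, rfl⟩
  have S0 : S 0 = s := by simp [hS]
  have X0 : X 0 = x := by simp [hX]
  have Q0 : Q 0 = q := by simp [hQ, S0, hs]
  have cS : ContinuousAt S 0 := by rw [hS]; fun_prop
  have cX : ContinuousAt X 0 := by rw [hX]; fun_prop
  have cQ : ContinuousAt Q 0 := by rw [hQ]; fun_prop
  have cz : ∀ m : ℤ, ContinuousAt (fun t => Q t ^ m) 0 := fun m =>
    cQ.zpow₀ m (Or.inl (Q0 ▸ hq))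
  have cL : ContinuousAt (fun t => gosperExtensionLeft ℓ n (Q t) (X t) (S t)) 0 := by
    unfold gosperExtensionLeft
    refine tendsto_finsetSum _ fun k hk => ?_
    have hk' := hden k (by simpa [Nat.lt_succ_iff] using hk)
    refine ContinuousAt.mul (ContinuousAt.div ?_ ?_ (by simpa only [S0, X0, Q0] using hk'))
      (cQ.pow k)
    · exact ((cz _).qpoch (cQ.pow 3) k).mul ((cX.qpoch cQ k).mul
        (((cz _).div cX (by rwa [X0])).qpoch cQ k))
    · exact ((((cQ.qpoch cQ k).mul (cQ.neg.qpoch cQ k)).mul ((cQ.mul cS).qpoch cQ k)).mul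
        ((cS.mul (cz _)).neg.qpoch cQ k)).mul ((cz _).qpoch cQ k)
  have cR : ContinuousAt (fun t => gosperExtensionRight ℓ n (Q t) (X t) (S t)) 0 := by
    unfold gosperExtensionRight
    have cXQ : ContinuousAt (fun t => X t / Q t) 0 := cX.div cQ (by rwa [Q0])
    have cXS : ContinuousAt (fun t => -(X t / S t)) 0 := (cX.div cS (by rwa [S0])).neg
    have cS' : ContinuousAt (fun t => -(1 / S t)) 0 :=
      (continuousAt_const.div cS (by rwa [S0])).neg
    have cX2 : ContinuousAt (fun t => X t ^ 2 / Q t ^ 2) 0 :=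
      (cX.pow 2).div (cQ.pow 2) (by rw [Q0]; exact pow_ne_zero 2 hq)
    refine ContinuousAt.mul (ContinuousAt.div ((cXQ.qpoch cQ ℓ).mul (cXS.qpoch cQ ℓ))
      ((((cX.pow 2).div cQ (by rwa [Q0])).qpoch cQ ℓ).mul (cS'.qpoch cQ ℓ))
      (by simpa only [S0, X0, Q0] using hdenℓ)) ?_
    refine tendsto_finsetSum _ fun i hi => ?_
    have hi' := hdeni i (by simpa [Nat.lt_succ_iff] using hi)
    refine ContinuousAt.mul (ContinuousAt.div (((continuousAt_const.mul
      ((cQ.pow _).div (cS.pow i) (by simpa [S0] using fun h => absurd h hs0))).mul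
      ((continuousAt_const.sub ((cX.pow 2).mul (cz _))).div (continuousAt_const.sub cX2)
        (by simpa only [Pi.sub_apply, X0, Q0] using hx2))).mul
      ((((cz _).qpoch cQ i).mul (cX.qpoch cQ i)).mul (cX2.qpoch cQ i)))
      (((cQ.qpoch cQ i).mul (cXQ.qpoch cQ i)).mul (((cX.pow 2).mul (cz _)).qpoch cQ i))
      (by simpa only [X0, Q0] using hi')) ?_
    exact ContinuousAt.div ((((cQ.pow _).mul cX).qpoch (cQ.pow 3) n).mul
      (((cz _).div cX (by rwa [X0])).qpoch (cQ.pow 3) n))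
      (((cQ.pow 2).qpoch (cQ.pow 3) n).mul ((cQ.pow 4).qpoch (cQ.pow 3) n))
      (by simpa only [Q0] using hden2)
  have hD := dense_generic_parameters hs0 hx
  set D := {t : ℝ | (∀ m : ℤ, m ≠ 0 → (s * Complex.exp t) ^ m ≠ 1) ∧
      ∀ m : ℤ, (x * Complex.exp (√2 * t : ℝ)) ^ 2 * (s * Complex.exp t) ^ m ≠ 1}
  have : (nhdsWithin (0 : ℝ) D).NeBot := mem_closure_iff_nhdsWithin_neBot.1 (hD 0)
  have heq : (fun t => gosperExtensionLeft ℓ n (Q t) (X t) (S t)) =ᶠ[nhdsWithin 0 D]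
      fun t => gosperExtensionRight ℓ n (Q t) (X t) (S t) :=
    Filter.eventuallyEq_of_mem self_mem_nhdsWithin fun t ht =>
      gosperExtension_of_generic ℓ n (by rw [hQ])
        (by rw [hS]; exact mul_ne_zero hs0 (Complex.exp_ne_zero _))
        (by rw [hS]; exact ht.1) (by rw [hX]; exact mul_ne_zero hx (Complex.exp_ne_zero _))
        (by rw [hX, hS]; exact ht.2)
  have key := tendsto_nhds_unique_of_eventuallyEq (cL.mono_left nhdsWithin_le_nhds)
    (cR.mono_left nhdsWithin_le_nhds) heq
  simp only [S0, X0, Q0] at key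
  exact key
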